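/- Let Γ be a countable directed graph, F a potential and β ∈ ℝ, and assume there is a vertex v₀ with 0 < Σ_{n=0}^∞ A(β)^n_{v₀,v} < ∞ for all v ∈ Γ_V. Let m be an e^{βF}-conformal measure on P(Γ) and M ⊆ Γ_V any set of vertices. Then the vector φ defined by φ_v = m({p ∈ Z(v) : s(p_k) ∈ M for infinitely many k}) satisfies Σ_{w ∈ Γ_V} A(β)_{v,w} φ_w = φ_v for all v ∈ Γ_V; in particular φ is an A(β)-harmonic vector unless it is identically zero. -/

import Mathlib

/-!
The set `E` of paths visiting `M` infinitely often is Borel and shift-invariant. Hence the shift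
maps `E ∩ Z(a)` onto `E ∩ Z(r(a))`, and conformality gives `m(E ∩ Z(a)) = e^{-βF(a)} φ_{r(a)}`.
Decomposing `E ∩ Z(v)` into the disjoint sets `E ∩ Z(a)`, with `s(a) = v`, and grouping the arrows
by their range yields `A(β)φ = φ`. Finiteness of `φ` is the regularity of `m`.
-/

open MeasureTheory Filter Topology
open scoped ENNReal NNReal

namespace GraphKMS

variable {V A : Type}

/-- The space `P(Γ)` of infinite paths of a directed graph with vertex set `V`,
arrow set `A`, source map `s` and range map `r`. -/
structure PathSpace (s r : A → V) : Type where
  seq : ℕ → A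
  compat : ∀ i, r (seq i) = s (seq (i + 1))

/-- The Borel σ-algebra of `P(Γ)`, i.e. the trace on `P(Γ)` of the Borel σ-algebra of the
product `A^ℕ` with `A` discrete. -/
instance (s r : A → V) : MeasurableSpace (PathSpace s r) :=
  MeasurableSpace.comap (fun p => p.seq) (@MeasurableSpace.pi ℕ (fun _ => A) (fun _ => ⊤))

/-- The shift map `σ`. -/
def shift (s r : A → V) (p : PathSpace s r) : PathSpace s r :=
  ⟨fun i => p.seq (i + 1), fun i => p.compat (i + 1)⟩

/-- The cylinder set `Z(v)` of a vertex. -/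
def cylV (s r : A → V) (v : V) : Set (PathSpace s r) := {p | s (p.seq 0) = v}

/-- The cylinder set `Z(a)` of an arrow. -/
def cylA (s r : A → V) (a : A) : Set (PathSpace s r) := {p | p.seq 0 = a}

/-- A finite path: a source vertex together with a compatible list of arrows.
The empty list corresponds to the path of length `0` given by the vertex `src`. -/
structure FinPath (s r : A → V) : Type where
  src : V
  arrows : List A
  head_src : ∀ h : arrows ≠ [], s (arrows.head h) = src
  chain : arrows.Chain' (fun a b => r a = s b)

/-- The range `r(μ)` of a finite path. -/
def finRng (s r : A → V) (μ : FinPath s r) : V :=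
  match μ.arrows.getLast? with
  | none => μ.src
  | some a => r a

/-- The additive extension `F(μ)` of a potential to finite paths. -/
def finWt (s r : A → V) (F : A → ℝ) (μ : FinPath s r) : ℝ := (μ.arrows.map F).sum

/-- The cylinder set `Z(μ)` of a finite path. -/
def finCyl (s r : A → V) (μ : FinPath s r) : Set (PathSpace s r) :=
  {p | s (p.seq 0) = μ.src ∧ ∀ i : Fin μ.arrows.length, p.seq i.1 = μ.arrows.get i}

/-- The set of vertices occurring in a finite path. -/
def finVerts (s r : A → V) (μ : FinPath s r) : Set V :=
  {μ.src} ∪ {v | ∃ a ∈ μ.arrows, s a = v ∨ r a = v}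

/-- The entries of the matrix `A(β)`. -/
noncomputable def Amat (s r : A → V) (F : A → ℝ) (β : ℝ) (v w : V) : ℝ≥0∞ :=
  ∑' a : {a : A // s a = v ∧ r a = w}, ENNReal.ofReal (Real.exp (-(β * F a.1)))

/-- Powers of a `[0,∞]`-valued matrix. -/
noncomputable def matPow (M : V → V → ℝ≥0∞) : ℕ → V → V → ℝ≥0∞
  | 0 => fun v w => ({v} : Set V).indicator (fun _ => (1 : ℝ≥0∞)) w
  | n + 1 => fun v w => ∑' u : V, M v u * matPow M n u w

/-- The entries of `A(β)ⁿ`. -/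
noncomputable def Apow (s r : A → V) (F : A → ℝ) (β : ℝ) (n : ℕ) (v w : V) : ℝ≥0∞ :=
  matPow (Amat s r F β) n v w

/-- The Green function `Σₙ A(β)ⁿ_{v,w}`. -/
noncomputable def Green (s r : A → V) (F : A → ℝ) (β : ℝ) (v w : V) : ℝ≥0∞ :=
  ∑' n : ℕ, Apow s r F β n v w

/-- The Martin kernel `K_β(v,w)` with base point `v₀`. -/
noncomputable def MartinK (s r : A → V) (F : A → ℝ) (β : ℝ) (v₀ v w : V) : ℝ≥0∞ :=
  Green s r F β v w / Green s r F β v₀ w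

/-- A harmonic vector for a `[0,∞]`-valued matrix: a nonzero, finite-valued,
nonnegative vector fixed by the matrix. -/
def IsHarmonic (M : V → V → ℝ≥0∞) (ψ : V → ℝ≥0∞) : Prop :=
  ψ ≠ 0 ∧ (∀ v, ψ v ≠ ∞) ∧ ∀ v, (∑' w : V, M v w * ψ w) = ψ v

/-- A minimal harmonic vector. -/
def IsMinimalHarmonic (M : V → V → ℝ≥0∞) (ψ : V → ℝ≥0∞) : Prop :=
  IsHarmonic M ψ ∧ ∀ φ : V → ℝ≥0∞, IsHarmonic M φ → (∀ v, φ v ≤ ψ v) →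
    ∃ c : ℝ≥0, 0 < c ∧ ∀ v, φ v = (c : ℝ≥0∞) * ψ v

/-- An `e^{βF}`-conformal measure: a nonzero Borel measure which is finite on the
cylinders of vertices and satisfies `m(σ(B ∩ Z(a))) = e^{βF(a)} m(B ∩ Z(a))`. -/
def Conformal (s r : A → V) (F : A → ℝ) (β : ℝ) (m : Measure (PathSpace s r)) : Prop :=
  m ≠ 0 ∧ (∀ v : V, m (cylV s r v) ≠ ∞) ∧
    ∀ (a : A) (B : Set (PathSpace s r)), MeasurableSet B →
      m (shift s r '' (B ∩ cylA s r a)) =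
        ENNReal.ofReal (Real.exp (β * F a)) * m (B ∩ cylA s r a)

/-- An extremal conformal measure: every conformal measure dominated by it is a
positive scalar multiple of it. -/
def ExtremalConformal (s r : A → V) (F : A → ℝ) (β : ℝ) (m : Measure (PathSpace s r)) : Prop :=
  Conformal s r F β m ∧ ∀ m' : Measure (PathSpace s r), Conformal s r F β m' →
    (∀ B : Set (PathSpace s r), MeasurableSet B → m' B ≤ m B) →
    ∃ c : ℝ≥0, 0 < c ∧ m' = (c : ℝ≥0∞) • m

/-- A wandering path: its vertices leave every finite set of vertices. -/
def Wandering (s r : A → V) (p : PathSpace s r) : Prop :=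
  ∀ F₀ : Finset V, ∃ N : ℕ, ∀ i, N ≤ i → s (p.seq i) ∉ F₀

/-- A ray: an infinite path with pairwise distinct vertices. -/
def IsRay (s r : A → V) (p : PathSpace s r) : Prop :=
  Function.Injective fun i => s (p.seq i)

/-- The relation `p → q` between (wandering) paths. -/
def Leads (s r : A → V) (p q : PathSpace s r) : Prop :=
  ∀ (F₀ : Finset V) (N : ℕ), ∃ n₁ n₂ : ℕ, N ≤ n₁ ∧ N ≤ n₂ ∧
    ∃ μ : FinPath s r, μ.src = s (p.seq n₁) ∧ finRng s r μ = s (q.seq n₂) ∧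
      ∀ v ∈ finVerts s r μ, v ∉ F₀

/-- Nonempty path lists from `v` to `w`. -/
def IsPathList (s r : A → V) (l : List A) (v w : V) : Prop :=
  l ≠ [] ∧ l.Chain' (fun a b => r a = s b) ∧
    (∀ h : l ≠ [], s (l.head h) = v) ∧ ∀ h : l ≠ [], r (l.getLast h) = w

/-- The set `L_j(y)` (zero-indexed in `j`). -/
def Lset (s r : A → V) (p : PathSpace s r) (j : ℕ) : Set (List A) :=
  {l | IsPathList s r l (s (p.seq j)) (s (p.seq (j + 1))) ∧
    ∀ a ∈ l, ∀ i ≤ j, r a ≠ s (p.seq i)}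

/-- The sum `Σ_{μ ∈ L_j(y)} e^{-βF(μ)}`. -/
noncomputable def LSum (s r : A → V) (F : A → ℝ) (β : ℝ) (p : PathSpace s r) (j : ℕ) : ℝ≥0∞ :=
  ∑' l : Lset s r p j, ENNReal.ofReal (Real.exp (-(β * (l.1.map F).sum)))

/-- The product `𝕎(y[1,k+1[)` (zero-indexed: the product of the first `k` level sums). -/
noncomputable def Wprod (s r : A → V) (F : A → ℝ) (β : ℝ) (p : PathSpace s r) (k : ℕ) : ℝ≥0∞ :=
  ∏ j ∈ Finset.range k, LSum s r F β p j

/-- `𝕍_β(v,y)`: the limit of the nondecreasing sequence of quotients. -/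
noncomputable def Vbeta (s r : A → V) (F : A → ℝ) (β : ℝ) (v : V) (p : PathSpace s r) : ℝ≥0∞ :=
  Filter.limsup (fun k => Green s r F β v (s (p.seq k)) / Wprod s r F β p k) Filter.atTop

/-- `B_k(y)` (zero-indexed in `k`). -/
def Bset (s r : A → V) (p : PathSpace s r) (k : ℕ) : Set (PathSpace s r) :=
  {x | s (x.seq 0) = s (p.seq k) ∧ ∀ i, 1 ≤ i → ∀ j ≤ k, s (x.seq i) ≠ s (p.seq j)}

/-- `𝔹_k(y)` (zero-indexed in `k`). -/
def BBset (s r : A → V) (p : PathSpace s r) (k : ℕ) : Set (PathSpace s r) :=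
  Bset s r p k ∩ ⋂ (j : ℕ) (_ : k + 1 ≤ j), ⋃ i : ℕ, (shift s r)^[i] ⁻¹' Bset s r p j

/-- `𝔹(y)`. -/
def BB (s r : A → V) (p : PathSpace s r) : Set (PathSpace s r) :=
  ⋃ (n : ℕ) (k : ℕ), (shift s r)^[n] ⁻¹' ((shift s r)^[k] '' BBset s r p 0)

/-- A simple path from `v` to `w`: no arrow except possibly the last one has range `w`. -/
def IsSimplePath (s r : A → V) (v w : V) (l : List A) : Prop :=
  IsPathList s r l v w ∧ ∀ a ∈ l.dropLast, r a ≠ w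

/-- `R_{βF}(v,w)`: the sum of `e^{-βF(ν)}` over all simple paths `ν` from `v` to `w`. -/
noncomputable def Rsum (s r : A → V) (F : A → ℝ) (β : ℝ) (v w : V) : ℝ≥0∞ :=
  ∑' l : {l : List A // IsSimplePath s r v w l},
    ENNReal.ofReal (Real.exp (-(β * (l.1.map F).sum)))

open Classical in
/-- The restriction of a matrix to a subset of the index set (extended by `0`). -/
noncomputable def restrMat (M : V → V → ℝ≥0∞) (S : Set V) (v w : V) : ℝ≥0∞ :=
  if v ∈ S ∧ w ∈ S then M v w else 0

/-- A loop: a nonempty path list whose range equals its source. -/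
def IsLoop (s r : A → V) (l : List A) : Prop :=
  l ≠ [] ∧ l.Chain' (fun a b => r a = s b) ∧
    ∀ h : l ≠ [], r (l.getLast h) = s (l.head h)

/-- The paths that visit `M` infinitely often. -/
def infVisits (s r : A → V) (M : Set V) : Set (PathSpace s r) :=
  {p | {k : ℕ | s (p.seq k) ∈ M}.Infinite}

lemma measurableSet_coord (s r : A → V) (k : ℕ) (S : Set A) :
    MeasurableSet {p : PathSpace s r | p.seq k ∈ S} := by
  let _ : MeasurableSpace A := ⊤
  have h1 : Measurable (fun p : PathSpace s r => p.seq) := comap_measurable _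
  have h2 : Measurable (fun p : PathSpace s r => p.seq k) := (measurable_pi_apply k).comp h1
  exact h2 (MeasurableSpace.measurableSet_top (s := S))

lemma measurableSet_infVisits (s r : A → V) (M : Set V) :
    MeasurableSet (infVisits s r M) := by
  have h : infVisits s r M =
      ⋂ n : ℕ, ⋃ k : ℕ, ⋃ _ : n ≤ k, {p : PathSpace s r | p.seq k ∈ s ⁻¹' M} := by
    ext p
    simp only [infVisits, Set.mem_ofPred_eq, Set.mem_iInter, Set.mem_iUnion, Set.mem_preimage,
      ← Nat.frequently_atTop_iff_infinite, frequently_atTop, exists_prop]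
  rw [h]
  exact MeasurableSet.iInter fun n => MeasurableSet.iUnion fun k =>
    MeasurableSet.iUnion fun _ => measurableSet_coord s r k _

lemma shift_mem_infVisits (s r : A → V) (M : Set V) (p : PathSpace s r) :
    shift s r p ∈ infVisits s r M ↔ p ∈ infVisits s r M := by
  simp only [infVisits, Set.mem_ofPred_eq, ← Nat.frequently_atTop_iff_infinite, shift]
  constructor
  · exact fun h => (tendsto_add_atTop_nat 1).frequently h
  · intro h
    rw [frequently_atTop] at h ⊢
    intro n
    obtain ⟨k, hk, hM⟩ := h (n + 1)
    obtain ⟨j, rfl⟩ : ∃ j, k = j + 1 := ⟨k - 1, by omega⟩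
    exact ⟨j, by omega, hM⟩

/-- A path starting at `r a` can be prolonged backwards by `a`, so the shift maps `E ∩ Z(a)` onto
`E ∩ Z(r a)`, where `E` is the shift-invariant set of paths visiting `M` infinitely often. -/
lemma shift_image (s r : A → V) (M : Set V) (a : A) :
    shift s r '' (infVisits s r M ∩ cylA s r a) = cylV s r (r a) ∩ infVisits s r M := by
  ext q
  constructor
  · rintro ⟨p, ⟨hp, rfl⟩, rfl⟩
    exact ⟨(p.compat 0).symm, (shift_mem_infVisits s r M p).2 hp⟩
  · rintro ⟨hq, hE⟩
    let p : PathSpace s r := ⟨fun n => Nat.casesOn n a q.seq, fun i => by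
      cases i with
      | zero => exact hq.symm
      | succ i => exact q.compat i⟩
    have hpq : shift s r p = q := rfl
    exact ⟨p, ⟨(shift_mem_infVisits s r M p).1 (hpq ▸ hE), rfl⟩, hpq⟩

lemma measure_infVisits_cylA (s r : A → V) (F : A → ℝ) (β : ℝ)
    (m : Measure (PathSpace s r)) (hm : Conformal s r F β m) (M : Set V) (a : A) :
    m (infVisits s r M ∩ cylA s r a) =
      ENNReal.ofReal (Real.exp (-(β * F a))) * m (cylV s r (r a) ∩ infVisits s r M) := by
  rw [← shift_image, hm.2.2 a _ (measurableSet_infVisits s r M), ← mul_assoc,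
    ← ENNReal.ofReal_mul (Real.exp_pos _).le, ← Real.exp_add]
  simp

lemma tsum_Amat_mul (s r : A → V) (F : A → ℝ) (β : ℝ) (φ : V → ℝ≥0∞) (v : V) :
    ∑' w : V, Amat s r F β v w * φ w =
      ∑' a : {a : A // s a = v}, ENNReal.ofReal (Real.exp (-(β * F a.1))) * φ (r a.1) := by
  classical
  rw [← (Equiv.sigmaFiberEquiv fun a : {a : A // s a = v} => r a.1).tsum_eq, ENNReal.tsum_sigma']
  refine tsum_congr fun w => ?_
  rw [Amat, ← ENNReal.tsum_mul_right,
    ← (Equiv.subtypeSubtypeEquivSubtypeInter (fun a => s a = v) (fun a => r a = w)).tsum_eq]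
  refine tsum_congr fun a => ?_
  obtain ⟨⟨a, ha⟩, rfl⟩ := a
  rfl

/-- for an `e^{βF}`-conformal measure `m` and a set of vertices `M`, the vector
`φ_v = m({p ∈ Z(v) : s(p_k) ∈ M for infinitely many k})` satisfies `A(β)φ = φ`; in
particular it is `A(β)`-harmonic unless it is identically zero. -/
theorem statement3 {V A : Type} [Countable V] [Countable A] (s r : A → V)
    (F : A → ℝ) (β : ℝ) (v₀ : V)
    (hv₀ : ∀ v : V, Green s r F β v₀ v ≠ 0 ∧ Green s r F β v₀ v ≠ ∞)
    (m : Measure (PathSpace s r)) (hm : Conformal s r F β m)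
    (M : Set V) (φ : V → ℝ≥0∞)
    (hφ : ∀ v : V, φ v =
      m {p : PathSpace s r | s (p.seq 0) = v ∧ {k : ℕ | s (p.seq k) ∈ M}.Infinite}) :
    (∀ v : V, (∑' w : V, Amat s r F β v w * φ w) = φ v) ∧
    (φ ≠ 0 → IsHarmonic (Amat s r F β) φ) := by
  replace hφ : ∀ v, φ v = m (cylV s r v ∩ infVisits s r M) := hφ
  have key : ∀ v : V, (∑' w : V, Amat s r F β v w * φ w) = φ v := by
    intro v
    have hdecomp : cylV s r v ∩ infVisits s r M =
        ⋃ a : {a : A // s a = v}, infVisits s r M ∩ cylA s r a.1 := by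
      ext p
      simp only [cylV, cylA, Set.mem_inter_iff, Set.mem_ofPred_eq, Set.mem_iUnion, Subtype.exists,
        exists_prop]
      grind
    rw [tsum_Amat_mul, hφ v, hdecomp, measure_iUnion]
    · refine tsum_congr fun a => ?_
      rw [measure_infVisits_cylA s r F β m hm, hφ]
    · intro a b hab
      refine Set.disjoint_left.2 fun p hpa hpb => hab (Subtype.ext ?_)
      exact hpa.2.symm.trans hpb.2
    · exact fun a => (measurableSet_infVisits s r M).inter (measurableSet_coord s r 0 {a.1})
  refine ⟨key, fun h0 => ⟨h0, fun v => ?_, key⟩⟩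
  rw [hφ v]
  exact measure_ne_top_of_subset Set.inter_subset_left (hm.2.1 v)

end GraphKMS
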